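/- Let n be a positive even integer, n = 2m. For vectors a, b, c' of length n over GF(2), with a_L, a_R denoting the left half (entries 0,…,m−1) and right half (entries m,…,n−1) of a, and similarly for b and c', one has h(a, b, c') = h(a_L ⊕ a_R, b_L ⊕ b_R, c'_L) ⊕ g(a_R, b_R, c'_L) ⊕ h(a_R, b_R, c'_L ⊕ c'_R) ⊕ h(a_L, b_L, c'_L), where ⊕ on vectors denotes entrywise addition in GF(2), and g, h on the right-hand side are the corresponding polynomials for vectors of length m. -/

import Mathlib

/-- `g(a,b,c) = Σ_{i=0}^{n-1} Σ_{j=0}^{i} a_j b_{i-j} c_i` over `GF(2)`. -/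
def gPoly (n : ℕ) (a b c : ℕ → ZMod 2) : ZMod 2 :=
  ∑ i ∈ Finset.range n, ∑ j ∈ Finset.range (i + 1), a j * b (i - j) * c i

/-- `h(a,b,c') = Σ_{i=0}^{n-2} Σ_{j=i+1}^{n-1} a_j b_{n+i-j} c'_i` over `GF(2)`. -/
def hPoly (n : ℕ) (a b c' : ℕ → ZMod 2) : ZMod 2 :=
  ∑ i ∈ Finset.range (n - 1), ∑ j ∈ Finset.Ico (i + 1) n, a j * b (n + i - j) * c' i

theorem hPoly_eq_sum_range (n : ℕ) (a b c' : ℕ → ZMod 2) :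
    hPoly n a b c' =
      ∑ i ∈ Finset.range n, ∑ j ∈ Finset.Ico (i + 1) n, a j * b (n + i - j) * c' i := by
  cases n with
  | zero => simp [hPoly]
  | succ k => simp [hPoly, Finset.sum_range_succ _ k]

/-- Splitting the sum over `i < j < 2m` at `m` and at `m + i + 1`. -/
theorem sum_Ico_two_mul {M : Type*} [AddCommMonoid M] {m i : ℕ} (hi : i < m) (f : ℕ → M) :
    ∑ j ∈ Finset.Ico (i + 1) (2 * m), f j =
      ∑ j ∈ Finset.Ico (i + 1) m, f j + ∑ j ∈ Finset.range (i + 1), f (m + j)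
        + ∑ j ∈ Finset.Ico (i + 1) m, f (m + j) := by
  rw [← Finset.sum_Ico_consecutive f (show i + 1 ≤ m by omega) (show m ≤ 2 * m by omega),
    add_assoc, Finset.range_eq_Ico,
    Finset.sum_Ico_consecutive (fun j => f (m + j)) (Nat.zero_le _) (show i + 1 ≤ m by omega),
    Finset.sum_Ico_add f 0 m m, zero_add, two_mul]

/-- Recursive decomposition of `h(a,b,c')` for vectors of even length `n = 2m`
(Equation (33) of the paper). -/
theorem gf_h_recursive (m : ℕ) (hm : 0 < m) (a b c' : ℕ → ZMod 2) :
    hPoly (2 * m) a b c' =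
      hPoly m (fun i => a i + a (m + i)) (fun i => b i + b (m + i)) (fun i => c' i)
    + gPoly m (fun i => a (m + i)) (fun i => b (m + i)) (fun i => c' i)
    + hPoly m (fun i => a (m + i)) (fun i => b (m + i)) (fun i => c' i + c' (m + i))
    + hPoly m (fun i => a i) (fun i => b i) (fun i => c' i) := by
  have hlow : ∀ i ∈ Finset.range m,
      ∑ j ∈ Finset.Ico (i + 1) (2 * m), a j * b (2 * m + i - j) * c' i =
        ∑ j ∈ Finset.Ico (i + 1) m,
            (a j * b (m + (m + i - j)) + a (m + j) * b (m + i - j)) * c' i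
          + ∑ j ∈ Finset.range (i + 1), a (m + j) * b (m + (i - j)) * c' i := by
    intro i hi
    rw [sum_Ico_two_mul (Finset.mem_range.mp hi), add_right_comm, ← Finset.sum_add_distrib]
    congr 1 <;> refine Finset.sum_congr rfl fun j hj => ?_
    · rw [Finset.mem_Ico] at hj
      rw [show 2 * m + i - j = m + (m + i - j) by omega,
        show 2 * m + i - (m + j) = m + i - j by omega, add_mul]
    · rw [Finset.mem_range] at hj
      rw [show 2 * m + i - (m + j) = m + (i - j) by omega]
  have hhigh : ∀ i ∈ Finset.range m,
      ∑ j ∈ Finset.Ico (m + i + 1) (2 * m), a j * b (2 * m + (m + i) - j) * c' (m + i) =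
        ∑ j ∈ Finset.Ico (i + 1) m, a (m + j) * b (m + (m + i - j)) * c' (m + i) := by
    intro i _
    rw [two_mul, add_assoc m i 1, add_comm m (i + 1), ← Finset.sum_Ico_add]
    refine Finset.sum_congr rfl fun j hj => ?_
    rw [Finset.mem_Ico] at hj
    rw [show m + m + (m + i) - (m + j) = m + (m + i - j) by omega]
  simp only [hPoly_eq_sum_range, gPoly]
  rw [show Finset.range (2 * m) = Finset.range (m + m) by rw [two_mul], Finset.sum_range_add,
    Finset.sum_congr rfl hlow, Finset.sum_congr rfl hhigh]
  simp only [← Finset.sum_add_distrib]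
  refine Finset.sum_congr rfl fun i _ => ?_
  rw [add_right_comm, add_right_comm _ (∑ j ∈ Finset.range (i + 1), _),
    add_right_comm _ (∑ j ∈ Finset.range (i + 1), _)]
  simp only [← Finset.sum_add_distrib]
  congr 1
  refine Finset.sum_congr rfl fun j _ => ?_
  linear_combination
    -(a j * b (m + i - j) + a (m + j) * b (m + (m + i - j))) * c' i *
      CharTwo.two_eq_zero (R := ZMod 2)
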